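/- Let p be a prime. Let F = ∑_{j≥0} c_j T^j be a formal power series with coefficients c_j ∈ ℤ_p, and suppose some coefficient of F is a unit of ℤ_p. Let λ be the least index j with c_j ≠ 0 and let λ′ be the least index j with c_j ∈ ℤ_p^×. Let π ∈ ℂ_p satisfy 0 < ‖π‖ < 1 and ‖π‖^{λ′} > p^{−1}·‖π‖^{λ}. Then the series ∑_{j≥0} c_j π^j converges in ℂ_p and its sum S satisfies ‖S‖ = ‖π‖^{λ′}. -/

import Mathlib

/-! In an ultrametric group, the sum of a series with a strictly dominant term has the norm of that
term. Here the term of index `lam'` has norm `‖π‖ ^ lam'` and dominates: later terms carry at least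
one more factor of norm `‖π‖ < 1`, while earlier nonzero terms have index `≥ lam` and non-unit
coefficients, so that discreteness of the valuation on `ℤ_[p]` bounds them by `p⁻¹ * ‖π‖ ^ lam`. -/

open Filter

theorem norm_eq_of_hasSum_of_forall_norm_lt {ι E : Type*} [SeminormedAddCommGroup E]
    [IsUltrametricDist E] {f : ι → E} {S : E} {k : ι} (hf : HasSum f S)
    (hdom : ∀ j, j ≠ k → ‖f j‖ < ‖f k‖) : ‖S‖ = ‖f k‖ := by
  have norm_partial_sum : ∀ᶠ s : Finset ι in atTop, ‖∑ j ∈ s, f j‖ = ‖f k‖ := by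
    filter_upwards [eventually_ge_atTop {k}] with s hs
    exact IsUltrametricDist.isNonarchimedean_norm.apply_sum_eq_of_lt (fun y ↦ (norm_neg y).symm)
      (Finset.singleton_subset_iff.mp hs) fun j _ hj ↦ hdom j hj
  exact tendsto_nhds_unique_of_eventuallyEq hf.norm tendsto_const_nhds norm_partial_sum

section PowerSeries

variable {R : Type*} [SeminormedRing R] [NormOneClass R] {a : ℕ → R} {x : R}

theorem norm_mul_pow_le (b x : R) (j : ℕ) : ‖b * x ^ j‖ ≤ ‖b‖ * ‖x‖ ^ j :=
  (norm_mul_le _ _).trans (by gcongr; exact norm_pow_le x j)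

theorem summable_mul_pow_of_norm_le [CompleteSpace R] {B : ℝ} (ha : ∀ j, ‖a j‖ ≤ B)
    (hx : ‖x‖ < 1) : Summable fun j ↦ a j * x ^ j :=
  .of_norm_bounded ((summable_geometric_of_lt_one (norm_nonneg x) hx).mul_left B) fun j ↦
    (norm_mul_pow_le (a j) x j).trans (by gcongr; exact ha j)

theorem norm_mul_pow_lt_of_gap {ρ : ℝ} {m n j : ℕ} (hρ : 0 ≤ ρ) (ha : ∀ i, ‖a i‖ ≤ 1)
    (ha_zero : ∀ i < m, a i = 0) (ha_small : ∀ i < n, ‖a i‖ ≤ ρ) (hx : ‖x‖ < 1)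
    (hgap : ρ * ‖x‖ ^ m < ‖x‖ ^ n) (hj : j ≠ n) : ‖a j * x ^ j‖ < ‖x‖ ^ n := by
  have hxn : 0 < ‖x‖ ^ n := lt_of_le_of_lt (by positivity) hgap
  rcases hj.lt_or_gt with hjn | hnj
  · rcases lt_or_ge j m with hjm | hmj
    · simpa only [ha_zero j hjm, zero_mul, norm_zero] using hxn
    · calc ‖a j * x ^ j‖ ≤ ‖a j‖ * ‖x‖ ^ j := norm_mul_pow_le _ _ _
        _ ≤ ρ * ‖x‖ ^ m :=
          mul_le_mul (ha_small j hjn) (pow_le_pow_of_le_one (norm_nonneg x) hx.le hmj)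
            (by positivity) hρ
        _ < ‖x‖ ^ n := hgap
  · calc ‖a j * x ^ j‖ ≤ ‖a j‖ * ‖x‖ ^ j := norm_mul_pow_le _ _ _
      _ ≤ ‖x‖ ^ j := mul_le_of_le_one_left (by positivity) (ha j)
      _ ≤ ‖x‖ ^ (n + 1) := pow_le_pow_of_le_one (norm_nonneg x) hx.le hnj
      _ = ‖x‖ ^ n * ‖x‖ := pow_succ _ _
      _ < ‖x‖ ^ n := mul_lt_of_lt_one_right hxn hx

theorem exists_hasSum_mul_pow_and_norm_eq_of_gap [NormMulClass R] [CompleteSpace R]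
    [IsUltrametricDist R] {ρ : ℝ} {m n : ℕ} (hρ : 0 ≤ ρ) (ha : ∀ i, ‖a i‖ ≤ 1)
    (ha_zero : ∀ i < m, a i = 0) (ha_small : ∀ i < n, ‖a i‖ ≤ ρ) (ha_one : ‖a n‖ = 1)
    (hx : ‖x‖ < 1) (hgap : ρ * ‖x‖ ^ m < ‖x‖ ^ n) :
    ∃ S : R, HasSum (fun j ↦ a j * x ^ j) S ∧ ‖S‖ = ‖x‖ ^ n := by
  obtain ⟨S, hS⟩ := summable_mul_pow_of_norm_le ha hx
  have norm_dominant : ‖a n * x ^ n‖ = ‖x‖ ^ n := by rw [norm_mul, norm_pow, ha_one, one_mul]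
  have norm_lt_dominant (j : ℕ) (hj : j ≠ n) : ‖a j * x ^ j‖ < ‖a n * x ^ n‖ :=
    norm_dominant ▸ norm_mul_pow_lt_of_gap hρ ha ha_zero ha_small hx hgap hj
  exact ⟨S, hS, (norm_eq_of_hasSum_of_forall_norm_lt hS norm_lt_dominant).trans norm_dominant⟩

end PowerSeries

theorem norm_padicInt_le_inv_of_not_isUnit {p : ℕ} [Fact p.Prime] {z : ℤ_[p]} (hz : ¬IsUnit z) :
    ‖z‖ ≤ (p : ℝ)⁻¹ := by
  simpa only [zpow_neg_one] using
    (z.norm_le_pow_iff_norm_lt_pow_add_one (-1)).mpr (by simpa using PadicInt.not_isUnit_iff.mp hz)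

theorem norm_eval_of_power_series_at_small_pi_general
    (p : ℕ) [Fact p.Prime]
    (C : Type*) [NormedDivisionRing C] [CompleteSpace C] [NormedAlgebra ℚ_[p] C]
    (c : ℕ → ℤ_[p]) (lam lam' : ℕ)
    (hlam : IsLeast {j : ℕ | c j ≠ 0} lam)
    (hlam' : IsLeast {j : ℕ | IsUnit (c j)} lam')
    (π : C) (hπ1 : ‖π‖ < 1)
    (hgap : (p : ℝ)⁻¹ * ‖π‖ ^ lam < ‖π‖ ^ lam') :
    ∃ S : C,
      HasSum (fun j : ℕ => algebraMap ℚ_[p] C (c j : ℚ_[p]) * π ^ j) S ∧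
      ‖S‖ = ‖π‖ ^ lam' := by
  have : IsUltrametricDist C := .of_normedAlgebra ℚ_[p]
  have norm_coeff (j : ℕ) : ‖algebraMap ℚ_[p] C (c j)‖ = ‖c j‖ := norm_algebraMap' C _
  refine exists_hasSum_mul_pow_and_norm_eq_of_gap (by positivity) (fun j ↦ ?le_one)
    (fun j hj ↦ ?zero) (fun j hj ↦ ?small) ?unit hπ1 hgap
  case le_one => exact norm_coeff j ▸ (c j).norm_le_one
  case zero =>
    have hcj : c j = 0 := by_contra fun h ↦ hj.not_ge (hlam.2 h)
    rw [hcj, PadicInt.coe_zero, map_zero]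
  case small =>
    exact norm_coeff j ▸ norm_padicInt_le_inv_of_not_isUnit fun h ↦ hj.not_ge (hlam'.2 h)
  case unit => exact (norm_coeff lam').trans (PadicInt.isUnit_iff.mp hlam'.1)

/-- Let `p` be a prime and let `C` be a field like `ℂ_p`: a complete, algebraically closed,
nonarchimedean normed field equipped with an isometric `ℚ_p`-algebra structure (so that its
norm extends the `p`-adic norm, normalized by `‖p‖ = p⁻¹`).  Let `F = ∑_{j≥0} c_j T^j` be a
formal power series with coefficients `c_j ∈ ℤ_p` having some unit coefficient, let `lam` be
the least index `j` with `c_j ≠ 0` and `lam'` the least index `j` with `c_j ∈ ℤ_p^×`.  If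
`π ∈ C` satisfies `0 < ‖π‖ < 1` and `‖π‖^lam' > p⁻¹·‖π‖^lam`, then `∑_{j≥0} c_j π^j`
converges in `C` and its sum `S` satisfies `‖S‖ = ‖π‖^lam'`. -/
theorem norm_eval_of_power_series_at_small_pi
    (p : ℕ) [Fact p.Prime]
    (C : Type*) [NormedField C] [CompleteSpace C] [IsAlgClosed C]
    [IsUltrametricDist C] [NormedAlgebra ℚ_[p] C]
    (c : ℕ → ℤ_[p]) (lam lam' : ℕ)
    (hlam : IsLeast {j : ℕ | c j ≠ 0} lam)
    (hlam' : IsLeast {j : ℕ | IsUnit (c j)} lam')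
    (π : C) (hπ0 : 0 < ‖π‖) (hπ1 : ‖π‖ < 1)
    (hgap : (p : ℝ)⁻¹ * ‖π‖ ^ lam < ‖π‖ ^ lam') :
    ∃ S : C,
      HasSum (fun j : ℕ => algebraMap ℚ_[p] C (c j : ℚ_[p]) * π ^ j) S ∧
      ‖S‖ = ‖π‖ ^ lam' :=
  norm_eval_of_power_series_at_small_pi_general p C c lam lam' hlam hlam' π hπ1 hgap
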